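/- Let k ≥ 2, n ≥ 1, κ̄ = ⌈k/2⌉, L̄ = I_n ⊗ L_A^{(k)}, and 𝓛 = L̄ + Σ_{i=1}^{n−1} z_i z_iᵀ with z_i = e_{ik} − e_{ik+κ̄}. Then for every j ∈ {1, 2, …, k−1}: λ_{nj}(𝓛) < λ_{nj+1}(𝓛) = λ_{nj+1}(L̄), and this common value equals the (j+1)-th smallest eigenvalue of L_A^{(k)}. -/

import Mathlib

/-!
`𝓛` is obtained from `L̄` by adding a positive semidefinite matrix of rank at most `n - 1`, and
every eigenvalue of `L_A^{(k)}` is repeated `n` times in `L̄`. Write `t` for the common value of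
`λ_{nj+1}(L̄), …, λ_{nj+n}(L̄)`. Comparing quadratic forms on sums of eigenspaces gives
`t ≤ λ_{nj+1}(𝓛)`, and also `λ_{nj+1}(𝓛) ≤ λ_{nj+n}(L̄) = t` because the rank is less than `n`.
The strict inequality `λ_{nj}(𝓛) < t` is the borderline case of the same dimension count, whose
defect is the dimension of the space of vectors `x` with `L̄ x = t x` and all `⟨z_i, x⟩ = 0`.

No eigenvector of `L_A^{(k)}` vanishes at vertex `κ̄`: the spectrum is `{0, …, k} \ {κ̄}`, with
explicit eigenvectors. Hence the entry of such an `x` at vertex `κ̄` of a copy determines `x` on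
that copy, in particular at vertex `k`, where `x` takes the same value as at vertex `κ̄` of the
next copy. So this space has dimension at most one.
-/

/-- Laplacian matrix of the `k`-vertex antiregular graph (0-indexed vertices;
1-indexed vertices `i+1`, `j+1` adjacent iff `(i+1)+(j+1) ≤ k+1`). -/
def antiregLap (k : ℕ) : Matrix (Fin k) (Fin k) ℝ :=
  Matrix.of fun i j =>
    if i = j then
      ((Finset.univ.filter fun m : Fin k => m ≠ i ∧ i.val + m.val + 2 ≤ k + 1).card : ℝ)
    else if i.val + j.val + 2 ≤ k + 1 then -1 else 0

/-- The vector `z_i = e_{ik} - e_{ik+κ̄}` (1-indexed, `κ̄ = ⌈k/2⌉`, `i = p+1`),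
on the product index set: copy `p`, vertex `k` minus copy `p+1`, vertex `κ̄`. -/
def zvec (n k : ℕ) (hk : 2 ≤ k) (p : Fin (n - 1)) : Fin n × Fin k → ℝ :=
  fun q =>
    (if q = (⟨p.val, by have := p.isLt; omega⟩, ⟨k - 1, by omega⟩) then (1 : ℝ) else 0) -
    (if q = (⟨p.val + 1, by have := p.isLt; omega⟩, ⟨(k + 1) / 2 - 1, by omega⟩) then 1 else 0)

/-- `L̄ = I_n ⊗ L_A^{(k)}`, the Laplacian of `n` disjoint copies of the
`k`-vertex antiregular graph, indexed by (copy, vertex). -/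
def copiesLap (n k : ℕ) : Matrix (Fin n × Fin k) (Fin n × Fin k) ℝ :=
  Matrix.kroneckerMap (· * ·) (1 : Matrix (Fin n) (Fin n) ℝ) (antiregLap k)

/-- `𝓛 = I_n ⊗ L_A^{(k)} + Σ_{i=1}^{n-1} z_i z_iᵀ`, the Laplacian of `n`
interconnected copies of the `k`-vertex antiregular graph. -/
def interLap (n k : ℕ) (hk : 2 ≤ k) : Matrix (Fin n × Fin k) (Fin n × Fin k) ℝ :=
  copiesLap n k + ∑ p : Fin (n - 1), Matrix.vecMulVec (zvec n k hk p) (zvec n k hk p)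

open Matrix Module Set
open scoped Kronecker ComplexOrder

section Finrank

variable {K V W : Type*} [Field K] [AddCommGroup V] [Module K V] [FiniteDimensional K V]
  [AddCommGroup W] [Module K W]

theorem finrank_add_finrank_le_add_finrank_inf (p q : Submodule K V) :
    finrank K p + finrank K q ≤ finrank K V + finrank K (p ⊓ q : Submodule K V) := by
  rw [← Submodule.finrank_sup_add_finrank_inf_eq]
  gcongr
  exact Submodule.finrank_le _

theorem finrank_le_finrank_range_add_finrank_inf_ker (p : Submodule K V) (f : V →ₗ[K] W) :
    finrank K p ≤ finrank K f.range + finrank K (p ⊓ f.ker : Submodule K V) := by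
  have := finrank_add_finrank_le_add_finrank_inf p f.ker
  have := f.finrank_range_add_finrank_ker
  omega

end Finrank

theorem mem_ker_mulVecLin_sub {R m n : Type*} [CommRing R] [Fintype n] {A B : Matrix m n R}
    {x : n → R} : x ∈ (B - A).mulVecLin.ker ↔ B *ᵥ x = A *ᵥ x := by
  rw [LinearMap.mem_ker, mulVecLin_apply, sub_mulVec, sub_eq_zero]

section SpectralSubspace

variable {𝕜 ι : Type*} [RCLike 𝕜] [Fintype ι] [DecidableEq ι] {A B : Matrix ι ι 𝕜}

/-- The coordinates of a vector in the orthonormal eigenbasis of the Hermitian matrix `A`. -/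
noncomputable def eigenCoord (hA : A.IsHermitian) : (ι → 𝕜) ≃ₗ[𝕜] (ι → 𝕜) :=
  (UnitaryGroup.toLinearEquiv hA.eigenvectorUnitary).symm

theorem eigenCoord_apply (hA : A.IsHermitian) (x : ι → 𝕜) :
    eigenCoord hA x = star (hA.eigenvectorUnitary : Matrix ι ι 𝕜) *ᵥ x := rfl

theorem eigenCoord_mulVec (hA : A.IsHermitian) (x : ι → 𝕜) (i : ι) :
    eigenCoord hA (A *ᵥ x) i = hA.eigenvalues i * eigenCoord hA x i := by
  have h : star (hA.eigenvectorUnitary : Matrix ι ι 𝕜) * A =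
      Matrix.diagonal (RCLike.ofReal ∘ hA.eigenvalues) *
        star (hA.eigenvectorUnitary : Matrix ι ι 𝕜) := by
    rw [← hA.conjStarAlgAut_star_eigenvectorUnitary, Unitary.conjStarAlgAut_star_apply]
    simp [mul_assoc]
  rw [eigenCoord_apply, mulVec_mulVec, h, ← mulVec_mulVec, mulVec_diagonal, eigenCoord_apply,
    Function.comp_apply]

theorem star_eigenCoord_dotProduct_eigenCoord (hA : A.IsHermitian) (x y : ι → 𝕜) :
    star (eigenCoord hA x) ⬝ᵥ eigenCoord hA y = star x ⬝ᵥ y := by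
  rw [eigenCoord_apply, eigenCoord_apply, star_mulVec, star_eq_conjTranspose,
    conjTranspose_conjTranspose, ← dotProduct_mulVec, mulVec_mulVec, ← star_eq_conjTranspose,
    mem_unitaryGroup_iff.1 hA.eigenvectorUnitary.2, one_mulVec]

theorem eigenCoord_mulVec_sub_smul (hA : A.IsHermitian) (t : ℝ) (x : ι → 𝕜) (i : ι) :
    eigenCoord hA (A *ᵥ x - (t : 𝕜) • x) i = ↑(hA.eigenvalues i - t) * eigenCoord hA x i := by
  rw [map_sub, map_smul, Pi.sub_apply, Pi.smul_apply, eigenCoord_mulVec, smul_eq_mul,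
    RCLike.ofReal_sub, sub_mul]

theorem re_star_dotProduct_mulVec_sub_smul (hA : A.IsHermitian) (t : ℝ) (x : ι → 𝕜) :
    RCLike.re (star x ⬝ᵥ (A *ᵥ x - (t : 𝕜) • x)) =
      ∑ i, (hA.eigenvalues i - t) * ‖eigenCoord hA x i‖ ^ 2 := by
  rw [← star_eigenCoord_dotProduct_eigenCoord hA, dotProduct, map_sum]
  refine Finset.sum_congr rfl fun i _ => ?_
  rw [eigenCoord_mulVec_sub_smul, mul_left_comm, RCLike.re_ofReal_mul, Pi.star_apply,
    RCLike.star_def, RCLike.conj_mul]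
  norm_cast

/-- The sum of the eigenspaces of the Hermitian matrix `A` for its eigenvalues in `s`, described by
the vanishing of the other coordinates in an eigenbasis. Its dimension counts, with multiplicity,
the eigenvalues of `A` in `s`. -/
noncomputable def spectralSubspace (hA : A.IsHermitian) (s : Set ℝ) : Submodule 𝕜 (ι → 𝕜) :=
  (Pi.spanSubset 𝕜 (hA.eigenvalues ⁻¹' s)).comap (eigenCoord hA).toLinearMap

theorem mem_spectralSubspace {hA : A.IsHermitian} {s : Set ℝ} {x : ι → 𝕜} :
    x ∈ spectralSubspace hA s ↔ ∀ i, hA.eigenvalues i ∉ s → eigenCoord hA x i = 0 := by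
  simp [spectralSubspace, Pi.mem_spanSubset_iff]

theorem finrank_spectralSubspace (hA : A.IsHermitian) (s : Set ℝ) :
    finrank 𝕜 (spectralSubspace hA s) = (hA.eigenvalues ⁻¹' s).ncard := by
  rw [spectralSubspace, ← Pi.dim_spanSubset (R := 𝕜), Submodule.comap_equiv_eq_map_symm,
    LinearEquiv.finrank_map_eq]

theorem finrank_spectralSubspace_eq_countP (hA : A.IsHermitian) (s : Set ℝ)
    [DecidablePred (· ∈ s)] :
    finrank 𝕜 (spectralSubspace hA s) = A.charpoly.roots.countP (RCLike.re · ∈ s) := by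
  have h : hA.eigenvalues ⁻¹' s = Finset.univ.filter (hA.eigenvalues · ∈ s) := by ext; simp
  rw [finrank_spectralSubspace, hA.roots_charpoly_eq_eigenvalues, Multiset.countP_map, h,
    ncard_coe_finset]
  simp [Finset.card_def]

theorem finrank_spectralSubspace_add_compl (hA : A.IsHermitian) (s : Set ℝ) :
    finrank 𝕜 (spectralSubspace hA s) + finrank 𝕜 (spectralSubspace hA sᶜ) =
      finrank 𝕜 (ι → 𝕜) := by
  rw [finrank_spectralSubspace, finrank_spectralSubspace, preimage_compl, ncard_add_ncard_compl,
    finrank_fintype_fun_eq_card, Nat.card_eq_fintype_card]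

theorem finrank_le_finrank_spectralSubspace_add_finrank_inf (V : Submodule 𝕜 (ι → 𝕜))
    (hA : A.IsHermitian) (s : Set ℝ) :
    finrank 𝕜 V ≤ finrank 𝕜 (spectralSubspace hA s) +
      finrank 𝕜 (V ⊓ spectralSubspace hA sᶜ : Submodule 𝕜 (ι → 𝕜)) := by
  have := finrank_add_finrank_le_add_finrank_inf V (spectralSubspace hA sᶜ)
  have := finrank_spectralSubspace_add_compl hA s
  omega

theorem spectralSubspace_mono (hA : A.IsHermitian) {s s' : Set ℝ} (h : s ⊆ s') :
    spectralSubspace hA s ≤ spectralSubspace hA s' := fun _ hx =>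
  mem_spectralSubspace.2 fun i hi => mem_spectralSubspace.1 hx i (notMem_subset h hi)

section QuadraticForm

variable {hA : A.IsHermitian} {t : ℝ} {x : ι → 𝕜}

theorem eigenvalues_mem_of_mem_spectralSubspace {s : Set ℝ} (hx : x ∈ spectralSubspace hA s)
    {i : ι} (hi : eigenCoord hA x i ≠ 0) : hA.eigenvalues i ∈ s :=
  not_imp_comm.1 (mem_spectralSubspace.1 hx i) hi

theorem eq_zero_of_mem_spectralSubspace_of_mulVec_eq_smul {s : Set ℝ}
    (hx : x ∈ spectralSubspace hA s) (ht : t ∉ s) (h : A *ᵥ x = (t : 𝕜) • x) : x = 0 := by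
  refine (eigenCoord hA).map_eq_zero_iff.1 (funext fun i => ?_)
  by_contra (hi : eigenCoord hA x i ≠ 0)
  have hmul := eigenCoord_mulVec_sub_smul hA t x i
  rw [h, sub_self, map_zero, Pi.zero_apply, eq_comm, mul_eq_zero, or_iff_left hi,
    RCLike.ofReal_eq_zero, sub_eq_zero] at hmul
  exact ht (hmul ▸ eigenvalues_mem_of_mem_spectralSubspace hx hi)

theorem re_star_dotProduct_mulVec_sub_smul_nonneg (hx : x ∈ spectralSubspace hA (Ici t)) :
    0 ≤ RCLike.re (star x ⬝ᵥ (A *ᵥ x - (t : 𝕜) • x)) := by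
  rw [re_star_dotProduct_mulVec_sub_smul hA]
  refine Finset.sum_nonneg fun i _ => ?_
  by_cases hi : eigenCoord hA x i = 0
  · simp [hi]
  · exact mul_nonneg (sub_nonneg.2 (eigenvalues_mem_of_mem_spectralSubspace hx hi)) (sq_nonneg _)

theorem mulVec_eq_smul_of_mem_spectralSubspace_Iic (hx : x ∈ spectralSubspace hA (Iic t))
    (h : 0 ≤ RCLike.re (star x ⬝ᵥ (A *ᵥ x - (t : 𝕜) • x))) : A *ᵥ x = (t : 𝕜) • x := by
  have hterm : ∀ i ∈ Finset.univ, (hA.eigenvalues i - t) * ‖eigenCoord hA x i‖ ^ 2 ≤ 0 := by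
    intro i _
    by_cases hi : eigenCoord hA x i = 0
    · simp [hi]
    · exact mul_nonpos_of_nonpos_of_nonneg
        (sub_nonpos.2 (eigenvalues_mem_of_mem_spectralSubspace hx hi)) (sq_nonneg _)
  rw [re_star_dotProduct_mulVec_sub_smul hA] at h
  have hzero := (Finset.sum_eq_zero_iff_of_nonpos hterm).1 (le_antisymm (Finset.sum_nonpos hterm) h)
  refine sub_eq_zero.1 ((eigenCoord hA).map_eq_zero_iff.1 (funext fun i => ?_))
  rw [eigenCoord_mulVec_sub_smul, Pi.zero_apply, mul_eq_zero, RCLike.ofReal_eq_zero]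
  simpa using hzero i (Finset.mem_univ i)

end QuadraticForm

section Interlacing

theorem finrank_spectralSubspace_Iio_anti (hA : A.IsHermitian) (hB : B.IsHermitian)
    (h : (B - A).PosSemidef) (t : ℝ) :
    finrank 𝕜 (spectralSubspace hB (Iio t)) ≤ finrank 𝕜 (spectralSubspace hA (Iio t)) := by
  have hbot : spectralSubspace hB (Iio t) ⊓ spectralSubspace hA (Iio t)ᶜ = ⊥ := by
    refine (Submodule.eq_bot_iff _).2 fun x ⟨hxB, hxA⟩ => ?_
    rw [compl_Iio] at hxA
    refine eq_zero_of_mem_spectralSubspace_of_mulVec_eq_smul hxB self_notMem_Iio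
      (mulVec_eq_smul_of_mem_spectralSubspace_Iic (spectralSubspace_mono hB Iio_subset_Iic_self hxB)
        ?_)
    have hsplit : B *ᵥ x - (t : 𝕜) • x = (A *ᵥ x - (t : 𝕜) • x) + (B - A) *ᵥ x := by
      rw [sub_mulVec]; abel
    rw [hsplit, dotProduct_add, map_add]
    exact add_nonneg (re_star_dotProduct_mulVec_sub_smul_nonneg hxA) (h.re_dotProduct_nonneg x)
  have hsplit :=
    finrank_le_finrank_spectralSubspace_add_finrank_inf (spectralSubspace hB (Iio t)) hA (Iio t)
  rwa [hbot, finrank_bot, add_zero] at hsplit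

theorem spectralSubspace_Iic_inf_ker_inf_spectralSubspace_Ici_le (hA : A.IsHermitian)
    (hB : B.IsHermitian) (t : ℝ) :
    spectralSubspace hA (Iic t) ⊓ (B - A).mulVecLin.ker ⊓ spectralSubspace hB (Ici t) ≤
      End.eigenspace (toLin' A) (t : 𝕜) ⊓ (B - A).mulVecLin.ker := by
  rintro x ⟨⟨hxA, hker⟩, hxB⟩
  refine ⟨End.mem_eigenspace_iff.2 (mulVec_eq_smul_of_mem_spectralSubspace_Iic hxA ?_), hker⟩
  exact mem_ker_mulVecLin_sub.1 hker ▸ re_star_dotProduct_mulVec_sub_smul_nonneg hxB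

theorem finrank_spectralSubspace_Iic_le_add_rank (hA : A.IsHermitian) (hB : B.IsHermitian) (t : ℝ) :
    finrank 𝕜 (spectralSubspace hA (Iic t)) ≤
      finrank 𝕜 (spectralSubspace hB (Iic t)) + (B - A).rank := by
  have hbot : spectralSubspace hA (Iic t) ⊓ (B - A).mulVecLin.ker ⊓
      spectralSubspace hB (Iic t)ᶜ = ⊥ := by
    refine (Submodule.eq_bot_iff _).2 fun x ⟨hx, hxB⟩ => ?_
    rw [compl_Iic] at hxB
    obtain ⟨hAx, hker⟩ := spectralSubspace_Iic_inf_ker_inf_spectralSubspace_Ici_le hA hB t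
      ⟨hx, spectralSubspace_mono hB Ioi_subset_Ici_self hxB⟩
    exact eq_zero_of_mem_spectralSubspace_of_mulVec_eq_smul hxB self_notMem_Ioi
      ((mem_ker_mulVecLin_sub.1 hker).trans (End.mem_eigenspace_iff.1 hAx))
  have hrank := finrank_le_finrank_range_add_finrank_inf_ker (spectralSubspace hA (Iic t))
    (B - A).mulVecLin
  have hsplit := finrank_le_finrank_spectralSubspace_add_finrank_inf
    (spectralSubspace hA (Iic t) ⊓ (B - A).mulVecLin.ker) hB (Iic t)
  rw [hbot, finrank_bot] at hsplit
  rw [Matrix.rank]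
  omega

theorem finrank_spectralSubspace_Iic_le_add_rank_add_finrank_eigenspace (hA : A.IsHermitian)
    (hB : B.IsHermitian) (t : ℝ) :
    finrank 𝕜 (spectralSubspace hA (Iic t)) ≤
      finrank 𝕜 (spectralSubspace hB (Iio t)) + (B - A).rank +
        finrank 𝕜 (End.eigenspace (toLin' A) (t : 𝕜) ⊓ (B - A).mulVecLin.ker :
          Submodule 𝕜 (ι → 𝕜)) := by
  have hrank := finrank_le_finrank_range_add_finrank_inf_ker (spectralSubspace hA (Iic t))
    (B - A).mulVecLin
  have hsplit := finrank_le_finrank_spectralSubspace_add_finrank_inf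
    (spectralSubspace hA (Iic t) ⊓ (B - A).mulVecLin.ker) hB (Iio t)
  have hle := Submodule.finrank_mono
    (spectralSubspace_Iic_inf_ker_inf_spectralSubspace_Ici_le hA hB t)
  rw [compl_Iio] at hsplit
  rw [Matrix.rank]
  omega

end Interlacing

end SpectralSubspace

section SortedEnumeration

theorem apply_mem_iff_lt_countP_range_map {α : Type*} [Preorder α] {s : ℕ → α} (hs : Monotone s)
    {S : Set α} [DecidablePred (· ∈ S)] (hS : IsLowerSet S) {j N : ℕ} (hj : j < N) :
    s j ∈ S ↔ j < ((Multiset.range N).map s).countP (· ∈ S) := by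
  have hcount : ((Multiset.range N).map s).countP (· ∈ S) =
      ((Finset.range N).filter (s · ∈ S)).card := Multiset.countP_map ..
  rw [hcount]
  constructor
  · intro h
    have hsub : Finset.range (j + 1) ⊆ (Finset.range N).filter (s · ∈ S) := fun i hi => by
      rw [Finset.mem_range, Nat.lt_succ_iff] at hi
      exact Finset.mem_filter.2 ⟨Finset.mem_range.2 (hi.trans_lt hj), hS (hs hi) h⟩
    simpa using Finset.card_le_card hsub
  · contrapose!
    intro h
    have hsub : (Finset.range N).filter (s · ∈ S) ⊆ Finset.range j := fun i hi =>
      Finset.mem_range.2 (not_le.1 fun hji => h (hS (hs hji) (Finset.mem_filter.1 hi).2))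
    simpa using Finset.card_le_card hsub

variable {ι : Type*} [Fintype ι] [DecidableEq ι] {A : Matrix ι ι ℝ} {s : ℕ → ℝ} {t : ℝ} {j N : ℕ}

theorem apply_mem_iff_lt_finrank_spectralSubspace (hA : A.IsHermitian) (hs : Monotone s)
    (hroots : A.charpoly.roots = (Multiset.range N).map s) {S : Set ℝ} (hS : IsLowerSet S)
    (hj : j < N) : s j ∈ S ↔ j < finrank ℝ (spectralSubspace hA S) := by
  classical
  rw [finrank_spectralSubspace_eq_countP, hroots]
  exact apply_mem_iff_lt_countP_range_map hs hS hj

theorem apply_lt_iff_lt_finrank_spectralSubspace (hA : A.IsHermitian) (hs : Monotone s)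
    (hroots : A.charpoly.roots = (Multiset.range N).map s) (hj : j < N) :
    s j < t ↔ j < finrank ℝ (spectralSubspace hA (Iio t)) :=
  apply_mem_iff_lt_finrank_spectralSubspace hA hs hroots (isLowerSet_Iio t) hj

theorem apply_eq_iff_finrank_spectralSubspace (hA : A.IsHermitian) (hs : Monotone s)
    (hroots : A.charpoly.roots = (Multiset.range N).map s) (hj : j < N) :
    s j = t ↔ finrank ℝ (spectralSubspace hA (Iio t)) ≤ j ∧
      j < finrank ℝ (spectralSubspace hA (Iic t)) := by
  rw [eq_iff_le_not_lt, apply_lt_iff_lt_finrank_spectralSubspace hA hs hroots hj, not_lt,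
    ← apply_mem_iff_lt_finrank_spectralSubspace hA hs hroots (isLowerSet_Iic t) hj, mem_Iic,
    and_comm]

end SortedEnumeration

section SimpleSpectrum

variable {K V κ : Type*} [Field K] [AddCommGroup V] [Module K V] [FiniteDimensional K V]
  [Fintype κ] {f : End K V} {μ : κ → K} {u : κ → V}

theorem eq_zero_of_apply_eq_smul_of_apply_eq_zero (hμ : Function.Injective μ)
    (hu : ∀ s, f (u s) = μ s • u s) (hcard : Fintype.card κ = finrank K V) {φ : V →ₗ[K] K}
    (hφ : ∀ s, φ (u s) ≠ 0) {t : K} {y : V} (hy : f y = t • y) (h0 : φ y = 0) : y = 0 := by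
  have hli : LinearIndependent K u := End.eigenvectors_linearIndependent' f μ hμ u fun s =>
    End.hasEigenvector_iff.2 ⟨End.mem_eigenspace_iff.2 (hu s), fun h => hφ s (by simp [h])⟩
  have hspan := hli.span_eq_top_of_card_eq_finrank' hcard
  obtain ⟨c, rfl⟩ : ∃ c : κ → K, ∑ s, c s • u s = y :=
    (Submodule.mem_span_range_iff_exists_fun K).1 (hspan ▸ Submodule.mem_top)
  have hcoeff (s : κ) (hs : c s ≠ 0) : μ s = t := by
    have hsum : ∑ s, (c s * (μ s - t)) • u s = 0 := by
      simpa [hu, mul_sub, sub_smul, mul_smul, Finset.smul_sum, smul_comm t, sub_eq_zero] using hy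
    have := Fintype.linearIndependent_iff.1 hli _ hsum s
    simpa [hs, sub_eq_zero] using this
  have hzero (s : κ) : c s = 0 := by
    by_contra hs
    have hsingle : ∑ r, c r * φ (u r) = c s * φ (u s) :=
      Fintype.sum_eq_single s fun r hr => by
        rw [not_ne_iff.1 fun h => hr (hμ ((hcoeff r h).trans (hcoeff s hs).symm)), zero_mul]
    exact mul_ne_zero hs (hφ s) (by simpa [hsingle] using h0)
  simp [hzero]

end SimpleSpectrum

section Antiregular

variable {k : ℕ}

/-- The antiregular graph on `k` vertices, with 0-indexed vertices as in `antiregLap`. -/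
def antiregGraph (k : ℕ) : SimpleGraph (Fin k) where
  Adj i j := i ≠ j ∧ i.val + j.val + 2 ≤ k + 1
  symm := ⟨fun i j h => ⟨h.1.symm, by omega⟩⟩

instance (k : ℕ) : DecidableRel (antiregGraph k).Adj := fun i j =>
  inferInstanceAs (Decidable (i ≠ j ∧ i.val + j.val + 2 ≤ k + 1))

theorem antiregGraph_adj {i j : Fin k} :
    (antiregGraph k).Adj i j ↔ i ≠ j ∧ i.val + j.val + 2 ≤ k + 1 := Iff.rfl

theorem antiregLap_eq_lapMatrix (k : ℕ) : antiregLap k = (antiregGraph k).lapMatrix ℝ := by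
  ext i j
  rw [SimpleGraph.lapMatrix, Matrix.sub_apply, SimpleGraph.degMatrix, Matrix.diagonal_apply,
    SimpleGraph.adjMatrix_apply, ← SimpleGraph.card_neighborFinset_eq_degree,
    SimpleGraph.neighborFinset_eq_filter]
  by_cases hij : i = j
  · simp [antiregLap, antiregGraph_adj, hij, ne_comm]
  · have hadj : (antiregGraph k).Adj i j ↔ i.val + j.val + 2 ≤ k + 1 := and_iff_right hij
    simp only [antiregLap, of_apply, if_neg hij, zero_sub, hadj, neg_ite, neg_zero]

theorem isHermitian_antiregLap (k : ℕ) : (antiregLap k).IsHermitian :=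
  antiregLap_eq_lapMatrix k ▸ (antiregGraph k).isHermitian_lapMatrix ℝ

theorem neighborFinset_antiregGraph (i : Fin k) :
    (antiregGraph k).neighborFinset i =
      (Finset.univ.map (Fin.castLEEmb (Nat.sub_le k i))).erase i := by
  ext j
  simp only [SimpleGraph.mem_neighborFinset, antiregGraph_adj, Finset.mem_erase, Finset.mem_map,
    Finset.mem_univ, true_and, ne_comm (a := i), and_congr_right_iff]
  intro _
  constructor
  · exact fun h => ⟨⟨j, by omega⟩, rfl⟩
  · rintro ⟨a, rfl⟩
    simp only [Fin.castLEEmb_apply, Fin.val_castLE]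
    omega

theorem antiregLap_mulVec_apply (w : ℕ → ℝ) (i : Fin k) :
    (antiregLap k *ᵥ fun j => w j) i =
      (k - i : ℕ) * w i - ∑ j ∈ Finset.range (k - i), w j := by
  rw [antiregLap_eq_lapMatrix, SimpleGraph.lapMatrix_mulVec_apply,
    ← SimpleGraph.card_neighborFinset_eq_degree, ← nsmul_eq_mul, ← Finset.sum_const,
    ← Finset.sum_sub_distrib, neighborFinset_antiregGraph, Finset.sum_erase _ (sub_self _),
    Finset.sum_map, Finset.sum_sub_distrib]
  simp [Fin.sum_univ_eq_sum_range (fun j => w j)]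

/-- The sum of the first `r` entries of `antiregEigenvector k s`, for `s ≤ k`. -/
def antiregPartialSum (k s r : ℕ) : ℝ :=
  if s ≤ r ↔ r + s ≤ k then r - s else 0

-- Vertex `i` is adjacent to the other vertices among the first `k - i`, so for a vector `w` with
-- partial sums `F` the `i`-th row of `L w = s w` reads `(k - i) w_i - F (k - i) = s w_i`.
theorem sub_mul_antiregPartialSum_sub {k s i r : ℕ} (hir : i + r = k) :
    (r - s : ℝ) * (antiregPartialSum k s (i + 1) - antiregPartialSum k s i) =
      antiregPartialSum k s r := by
  have hmirror : (s ≤ r ↔ r + s ≤ k) ↔ (s ≤ i ↔ i + s ≤ k) := by omega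
  simp only [antiregPartialSum, hmirror]
  by_cases hi : s ≤ i ↔ i + s ≤ k <;> by_cases hi' : s ≤ i + 1 ↔ i + 1 + s ≤ k
  · rw [if_pos hi, if_pos hi', if_pos hi]
    push_cast
    ring
  · rw [if_pos hi, if_neg hi', if_pos hi]
    rcases (by omega : r = s ∨ s = i + 1) with rfl | rfl <;> push_cast <;> ring
  · rw [if_neg hi, if_pos hi', if_neg hi]
    rcases (by omega : r = s ∨ s = i + 1) with rfl | rfl <;> push_cast <;> ring
  · rw [if_neg hi, if_neg hi', if_neg hi, sub_zero, mul_zero]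

/-- The eigenvector of `antiregLap k` for an eigenvalue `s ≤ k`, `s ≠ ⌈k/2⌉`, as a function on `ℕ`.
In 0-indexed coordinates it is `1_I - |I| • e_{k-s}`, where `I = [s, k-s)` or `I = (k-s, s)`,
whichever is nonempty. -/
def antiregEigenvector (k s j : ℕ) : ℝ :=
  antiregPartialSum k s (j + 1) - antiregPartialSum k s j

theorem sum_range_antiregEigenvector {s : ℕ} (hs : s ≤ k) (r : ℕ) :
    ∑ j ∈ Finset.range r, antiregEigenvector k s j = antiregPartialSum k s r := by
  simp only [antiregEigenvector, Finset.sum_range_sub]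
  simp [antiregPartialSum, hs]

theorem antiregLap_mulVec_antiregEigenvector {s : ℕ} (hs : s ≤ k) :
    (antiregLap k *ᵥ fun j => antiregEigenvector k s j) =
      (s : ℝ) • fun j : Fin k => antiregEigenvector k s j := by
  ext i
  have hrow := sub_mul_antiregPartialSum_sub (s := s) (Nat.add_sub_of_le i.isLt.le)
  rw [← antiregEigenvector] at hrow
  rw [antiregLap_mulVec_apply (antiregEigenvector k s), sum_range_antiregEigenvector hs, ← hrow,
    Pi.smul_apply, smul_eq_mul]
  ring

theorem antiregEigenvector_ne_zero {m s : ℕ} (hm : m + 1 = (k + 1) / 2) (hs : s ≠ m + 1) :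
    antiregEigenvector k s m ≠ 0 := by
  have hs' : ((m + 1 : ℕ) : ℝ) - s ≠ 0 := sub_ne_zero.2 (by exact_mod_cast hs.symm)
  have hnext : (s ≤ m + 1 ↔ m + 1 + s ≤ k) := by omega
  rw [antiregEigenvector, antiregPartialSum, if_pos hnext, antiregPartialSum]
  split_ifs
  · simp
  · simpa using hs'

theorem eq_zero_of_antiregLap_mulVec_eq_smul {m : Fin k} (hm : m.val + 1 = (k + 1) / 2) {t : ℝ}
    {y : Fin k → ℝ} (hy : antiregLap k *ᵥ y = t • y) (h0 : y m = 0) : y = 0 := by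
  let S : Finset ℕ := (Finset.range (k + 1)).erase (m + 1)
  have hcard : Fintype.card S = finrank ℝ (Fin k → ℝ) := by
    simp [S, Finset.card_erase_of_mem]
  have heigen (s : S) : toLin' (antiregLap k) (fun j => antiregEigenvector k s j) =
      (s : ℝ) • fun j : Fin k => antiregEigenvector k s j :=
    antiregLap_mulVec_antiregEigenvector
      (Finset.mem_range_succ_iff.1 (Finset.mem_of_mem_erase s.2))
  exact eq_zero_of_apply_eq_smul_of_apply_eq_zero (φ := LinearMap.proj m)
    (Nat.cast_injective.comp Subtype.val_injective) heigen hcard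
    (fun s => antiregEigenvector_ne_zero hm (Finset.ne_of_mem_erase s.2)) hy h0

end Antiregular

section Copies

variable {ι κ R : Type*} [DecidableEq κ]

theorem isHermitian_one_kronecker [CommSemiring R] [StarRing R] {M : Matrix ι ι R}
    (hM : M.IsHermitian) : ((1 : Matrix κ κ R) ⊗ₖ M).IsHermitian := by
  rw [IsHermitian, conjTranspose_kronecker, conjTranspose_one, hM.eq]

variable [Fintype ι] [Fintype κ]

theorem one_kronecker_mulVec_apply [CommSemiring R] (M : Matrix ι ι R) (x : κ × ι → R) (a : κ)
    (i : ι) : ((1 : Matrix κ κ R) ⊗ₖ M *ᵥ x) (a, i) = (M *ᵥ fun j => x (a, j)) i := by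
  simp [mulVec, dotProduct, Fintype.sum_prod_type, one_apply]

theorem charpoly_one_kronecker [CommRing R] [DecidableEq ι] (M : Matrix ι ι R) :
    ((1 : Matrix κ κ R) ⊗ₖ M).charpoly = M.charpoly ^ Fintype.card κ := by
  have hblock : (blockDiagonal fun _ : κ => M).charmatrix =
      blockDiagonal fun _ => M.charmatrix := by
    ext1 ⟨i, a⟩ ⟨j, b⟩
    by_cases hab : a = b <;> by_cases hij : i = j <;> simp [blockDiagonal_apply, hab, hij]
  rw [one_kronecker, charpoly_reindex, charpoly, hblock, det_blockDiagonal, Finset.prod_const,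
    Finset.card_univ, charpoly]

theorem finrank_spectralSubspace_one_kronecker {𝕜 : Type*} [RCLike 𝕜] [DecidableEq ι]
    {M : Matrix ι ι 𝕜} (hM : M.IsHermitian) (s : Set ℝ) :
    finrank 𝕜 (spectralSubspace (isHermitian_one_kronecker (κ := κ) hM) s) =
      Fintype.card κ * finrank 𝕜 (spectralSubspace hM s) := by
  classical
  rw [finrank_spectralSubspace_eq_countP, finrank_spectralSubspace_eq_countP,
    charpoly_one_kronecker, Polynomial.roots_pow, Multiset.countP_nsmul]

variable {K : Type*} [Field K] {n : ℕ} {M : Matrix ι ι K} {t : K} {u v : ι}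

theorem eq_zero_of_linked_copies (hn : 0 < n) (hM : ∀ y, M *ᵥ y = t • y → y v = 0 → y = 0)
    {x : Fin n × ι → K} (hx : (1 : Matrix (Fin n) (Fin n) K) ⊗ₖ M *ᵥ x = t • x)
    (hlink : ∀ p (hp : p + 1 < n), x (⟨p, p.lt_of_succ_lt hp⟩, u) = x (⟨p + 1, hp⟩, v))
    (h0 : x (⟨0, hn⟩, v) = 0) : x = 0 := by
  have hcopy (a : Fin n) (ha : x (a, v) = 0) : (fun j => x (a, j)) = 0 :=
    hM _ (funext fun i => by rw [← one_kronecker_mulVec_apply, hx]; rfl) ha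
  have hall (a : ℕ) (ha : a < n) : (fun j => x (⟨a, ha⟩, j)) = 0 := by
    induction a with
    | zero => exact hcopy _ h0
    | succ a ih => exact hcopy _ ((hlink a ha).symm.trans (congrFun (ih _) u))
  exact funext fun ⟨a, i⟩ => congrFun (hall a a.isLt) i

theorem finrank_linked_copies_le_one [DecidableEq ι] (hn : 0 < n)
    (hM : ∀ y, M *ᵥ y = t • y → y v = 0 → y = 0) {E : Submodule K (Fin n × ι → K)}
    (hE : E ≤ End.eigenspace (toLin' ((1 : Matrix (Fin n) (Fin n) K) ⊗ₖ M)) t)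
    (hlink : ∀ x ∈ E, ∀ p (hp : p + 1 < n),
      x (⟨p, p.lt_of_succ_lt hp⟩, u) = x (⟨p + 1, hp⟩, v)) : finrank K E ≤ 1 := by
  let entry : E →ₗ[K] K := (LinearMap.proj (⟨0, hn⟩, v)).domRestrict E
  have hentry : Function.Injective entry := (injective_iff_map_eq_zero _).2 fun x hx =>
    Subtype.ext (eq_zero_of_linked_copies hn hM (End.mem_eigenspace_iff.1 (hE x.2))
      (hlink x x.2) hx)
  simpa using LinearMap.finrank_le_finrank_of_injective hentry

end Copies

section Links

theorem isHermitian_copiesLap (n k : ℕ) : (copiesLap n k).IsHermitian :=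
  isHermitian_one_kronecker (isHermitian_antiregLap k)

theorem finrank_spectralSubspace_copiesLap (n k : ℕ) (s : Set ℝ) :
    finrank ℝ (spectralSubspace (isHermitian_copiesLap n k) s) =
      n * finrank ℝ (spectralSubspace (isHermitian_antiregLap k) s) :=
  (finrank_spectralSubspace_one_kronecker (isHermitian_antiregLap k) s).trans
    (by rw [Fintype.card_fin])

variable {n k : ℕ}

theorem zvec_dotProduct (hk : 2 ≤ k) (p : Fin (n - 1)) (x : Fin n × Fin k → ℝ) :
    zvec n k hk p ⬝ᵥ x =
      x (⟨p.val, by have := p.isLt; omega⟩, ⟨k - 1, by omega⟩) -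
      x (⟨p.val + 1, by have := p.isLt; omega⟩, ⟨(k + 1) / 2 - 1, by omega⟩) := by
  simp [zvec, dotProduct, sub_mul, Finset.sum_sub_distrib]

variable (n) (hk : 2 ≤ k)

theorem interLap_sub_copiesLap :
    interLap n k hk - copiesLap n k =
      (Matrix.of (zvec n k hk))ᴴ * Matrix.of (zvec n k hk) := by
  ext q r
  simp [interLap, Matrix.sum_apply, vecMulVec_apply, Matrix.mul_apply]

theorem posSemidef_interLap_sub_copiesLap : (interLap n k hk - copiesLap n k).PosSemidef := by
  rw [interLap_sub_copiesLap]
  exact posSemidef_conjTranspose_mul_self _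

theorem isHermitian_interLap : (interLap n k hk).IsHermitian := by
  rw [← add_sub_cancel (copiesLap n k) (interLap n k hk)]
  exact (isHermitian_copiesLap n k).add (posSemidef_interLap_sub_copiesLap n hk).isHermitian

theorem rank_interLap_sub_copiesLap_le : (interLap n k hk - copiesLap n k).rank ≤ n - 1 := by
  rw [interLap_sub_copiesLap]
  refine (rank_mul_le_right _ _).trans ?_
  simpa using rank_le_card_height (Matrix.of (zvec n k hk))

theorem finrank_spectralSubspace_interLap_Iio_le (t : ℝ) :
    finrank ℝ (spectralSubspace (isHermitian_interLap n hk) (Iio t)) ≤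
      finrank ℝ (spectralSubspace (isHermitian_copiesLap n k) (Iio t)) :=
  finrank_spectralSubspace_Iio_anti _ _ (posSemidef_interLap_sub_copiesLap n hk) t

theorem finrank_spectralSubspace_copiesLap_Iic_le_add (t : ℝ) :
    finrank ℝ (spectralSubspace (isHermitian_copiesLap n k) (Iic t)) ≤
      finrank ℝ (spectralSubspace (isHermitian_interLap n hk) (Iic t)) + (n - 1) :=
  (finrank_spectralSubspace_Iic_le_add_rank _ _ t).trans
    (Nat.add_le_add_left (rank_interLap_sub_copiesLap_le n hk) _)

variable {n}

theorem mem_ker_mulVecLin_interLap_sub_copiesLap {x : Fin n × Fin k → ℝ} :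
    x ∈ (interLap n k hk - copiesLap n k).mulVecLin.ker ↔ ∀ p, zvec n k hk p ⬝ᵥ x = 0 := by
  rw [interLap_sub_copiesLap, ker_mulVecLin_conjTranspose_mul_self, LinearMap.mem_ker,
    funext_iff]
  rfl

theorem finrank_eigenspace_copiesLap_inf_ker_le_one (hn : 0 < n) (t : ℝ) :
    finrank ℝ (End.eigenspace (toLin' (copiesLap n k)) t ⊓
      (interLap n k hk - copiesLap n k).mulVecLin.ker : Submodule ℝ (Fin n × Fin k → ℝ)) ≤ 1 := by
  let m : Fin k := ⟨(k + 1) / 2 - 1, by omega⟩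
  have hm : m.val + 1 = (k + 1) / 2 := Nat.sub_add_cancel (by omega)
  refine finrank_linked_copies_le_one (u := ⟨k - 1, by omega⟩) hn
    (fun y hy h0 => eq_zero_of_antiregLap_mulVec_eq_smul hm hy h0) inf_le_left ?_
  intro x hx p hp
  have hlink := (mem_ker_mulVecLin_interLap_sub_copiesLap hk).1 hx.2 ⟨p, by omega⟩
  rwa [zvec_dotProduct, sub_eq_zero] at hlink

theorem finrank_spectralSubspace_copiesLap_Iic_le_Iio_add (hn : 0 < n) (t : ℝ) :
    finrank ℝ (spectralSubspace (isHermitian_copiesLap n k) (Iic t)) ≤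
      finrank ℝ (spectralSubspace (isHermitian_interLap n hk) (Iio t)) + n :=
  calc
    _ ≤ _ + (interLap n k hk - copiesLap n k).rank + _ :=
      finrank_spectralSubspace_Iic_le_add_rank_add_finrank_eigenspace _ _ t
    _ ≤ _ + (n - 1) + 1 := by
      gcongr
      · exact rank_interLap_sub_copiesLap_le n hk
      · exact finrank_eigenspace_copiesLap_inf_ker_le_one hk hn t
    _ = _ + n := by rw [add_assoc, Nat.sub_add_cancel hn]

end Links

/-- Lemma: upper interlacing bound.  Eigenvalues are encoded
0-indexed: each list is monotone on `ℕ` and enumerates the roots of the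
characteristic polynomial with multiplicity.  For every `j ∈ {1,…,k-1}`
(1-indexed positions `nj` and `nj+1`):
`λ_{nj}(𝓛) < λ_{nj+1}(𝓛) = λ_{nj+1}(L̄)`, and the common value is the
`(j+1)`-th smallest eigenvalue of `L_A^{(k)}`. -/
theorem interLap_upper_eigenvalue_bounds (k n : ℕ) (hk : 2 ≤ k) (hn : 1 ≤ n)
    (ℓbar ℓ μ : ℕ → ℝ)
    (mbar : Monotone ℓbar) (mℓ : Monotone ℓ) (mμ : Monotone μ)
    (rbar : (copiesLap n k).charpoly.roots = (Multiset.range (n * k)).map ℓbar)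
    (rℓ : (interLap n k hk).charpoly.roots = (Multiset.range (n * k)).map ℓ)
    (rμ : (antiregLap k).charpoly.roots = (Multiset.range k).map μ) :
    ∀ j : ℕ, 1 ≤ j → j < k →
      ℓ (n * j - 1) < ℓ (n * j) ∧ ℓ (n * j) = ℓbar (n * j) ∧ ℓbar (n * j) = μ j := by
  intro j hj hjk
  have hpos : 0 < n * j := Nat.mul_pos hn hj
  have hlt : n * j < n * k := Nat.mul_lt_mul_of_pos_left hjk hn
  have hμ := (apply_eq_iff_finrank_spectralSubspace (isHermitian_antiregLap k) mμ rμ hjk).1 rfl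
  have hbar_Iio := Nat.mul_le_mul_left n hμ.1
  have hbar_Iic := Nat.mul_le_mul_left n (Nat.add_one_le_of_lt hμ.2)
  rw [← finrank_spectralSubspace_copiesLap] at hbar_Iio hbar_Iic
  rw [Nat.mul_add_one] at hbar_Iic
  have hℓ_Iio := finrank_spectralSubspace_interLap_Iio_le n hk (μ j)
  have hℓ_Iic := finrank_spectralSubspace_copiesLap_Iic_le_add n hk (μ j)
  have hℓ_strict := finrank_spectralSubspace_copiesLap_Iic_le_Iio_add hk hn (μ j)
  have hbar_eq : ℓbar (n * j) = μ j := (apply_eq_iff_finrank_spectralSubspace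
    (isHermitian_copiesLap n k) mbar rbar hlt).2 ⟨by omega, by omega⟩
  have hℓ_eq : ℓ (n * j) = μ j := (apply_eq_iff_finrank_spectralSubspace
    (isHermitian_interLap n hk) mℓ rℓ hlt).2 ⟨by omega, by omega⟩
  have hℓ_lt : ℓ (n * j - 1) < μ j := (apply_lt_iff_lt_finrank_spectralSubspace
    (isHermitian_interLap n hk) mℓ rℓ (by omega)).2 (by omega)
  exact ⟨hℓ_lt.trans_eq hℓ_eq.symm, hℓ_eq.trans hbar_eq.symm, hbar_eq⟩
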